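/- Let α ∈ (0,1). There exists a constant C > 0 (depending only on α) such that for every λ > 0 and every t ≥ 0, E_α(−λ t^α) ≤ C / (1 + λ t^α). -/

import Mathlib

/-- The Mittag-Leffler function `E_α(x) = ∑_{k=0}^∞ x^k / Γ(αk + 1)`. -/
noncomputable def mittagLeffler (α x : ℝ) : ℝ :=
  ∑' k : ℕ, x ^ k / Real.Gamma (α * k + 1)

/-!
The function `u(t) = E_α(-t^α)` solves the Volterra equation `u + k * u = 1` with the Abel kernel
`k(t) = t^(α-1) / Γ(α)`, since convolution with `k` maps each term of the series to the next one.
If `u` is nonincreasing, then `1 ≥ u(t) (1 + ∫₀ᵗ k) = u(t) (1 + t^α / Γ(α+1))`, which is the bound,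
because `Γ(α+1) ≤ 1`.

Monotonicity comes from a comparison principle: if `g + k * g = q` with `q > 0` and
`k(t' - s) / k(t - s) ≤ q(t') / q(t)` for `s < t < t'`, then `g > 0`, for at a first zero the past
of `g` contributes to `q` proportionally less than it did shortly before. With `q = 1` this yields
`u > 0`. The difference `g(t) = u(t) - u(t + δ)` satisfies the equation with the forcing term
`q(t) = ∫₀^δ k(t + δ - s) u(s) ds`, whose ratio condition follows from the log-convexity of `k`.
-/

open MeasureTheory Set Filter Topology intervalIntegral

/-- Positive, nonincreasing, locally integrable kernels on `(0, ∞)`, possibly singular at `0`: the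
class on which the Volterra equation `g + k * g = q` obeys a comparison principle. Values on
`(-∞, 0]` are irrelevant. -/
structure IsVolterraKernel (k : ℝ → ℝ) : Prop where
  pos : ∀ ⦃t⦄, 0 < t → 0 < k t
  antitoneOn : AntitoneOn k (Ioi 0)
  intervalIntegrable : ∀ ⦃t⦄, 0 ≤ t → IntervalIntegrable k volume 0 t

/-- The causal convolution `(k * u)(t)` on the half-line `[0, ∞)`. -/
noncomputable def volterraConv (k u : ℝ → ℝ) (t : ℝ) : ℝ :=
  ∫ s in (0 : ℝ)..t, k (t - s) * u s

/-- The Volterra resolvent of `k`: the solution `u` of `u + k * u = 1` on `[0, ∞)`. Continuity is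
required on all of `ℝ` for convenience; extending `u` by `u 0` to the left makes this harmless. -/
structure IsVolterraResolvent (k u : ℝ → ℝ) : Prop where
  continuous : Continuous u
  add_volterraConv : ∀ ⦃t⦄, 0 ≤ t → u t + volterraConv k u t = 1

lemma exists_first_nonpos {g : ℝ → ℝ} (hg : Continuous g) {a b : ℝ} (hab : a ≤ b)
    (ha : 0 < g a) (hb : g b ≤ 0) : ∃ T > a, g T ≤ 0 ∧ ∀ s ∈ Ico a T, 0 < g s := by
  set S : Set ℝ := Ici a ∩ g ⁻¹' Iic 0
  have hS : IsLeast S (sInf S) :=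
    (isClosed_Ici.inter (isClosed_Iic.preimage hg)).isLeast_csInf ⟨b, hab, hb⟩ ⟨a, fun _ hx ↦ hx.1⟩
  refine ⟨sInf S, lt_of_le_of_ne hS.1.1 fun h ↦ ?_, hS.1.2, fun s hs ↦ ?_⟩
  · exact ha.not_ge (h ▸ hS.1.2)
  · by_contra! hgs
    exact hs.2.not_ge (hS.2 ⟨hs.1, hgs⟩)

lemma exists_integral_lt {f : ℝ → ℝ} {b c : ℝ} (hf : IntervalIntegrable f volume 0 b)
    (hb : 0 < b) (hc : 0 < c) : ∃ ε ∈ Ioc 0 b, ∫ x in (0 : ℝ)..ε, f x < c := by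
  have hcont : ContinuousWithinAt (fun ε ↦ ∫ x in (0 : ℝ)..ε, f x) (Icc 0 b) 0 :=
    continuousWithinAt_primitive (by simp) (by simpa [hb.le] using hf)
  have hlim : Tendsto (fun ε ↦ ∫ x in (0 : ℝ)..ε, f x) (𝓝[>] 0) (𝓝 0) := by
    rw [← nhdsWithin_Ioc_eq_nhdsGT hb]
    simpa using (hcont.mono Ioc_subset_Icc_self).tendsto
  exact (Eventually.and (Ioc_mem_nhdsGT hb) (hlim.eventually_lt_const hc)).exists

lemma integral_comp_sub_mul_const (k : ℝ → ℝ) (a T c : ℝ) :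
    ∫ s in a..T, k (T - s) * c = (∫ x in (0 : ℝ)..T - a, k x) * c := by
  simp [intervalIntegral.integral_mul_const, integral_comp_sub_left]

namespace IsVolterraKernel

variable {k : ℝ → ℝ} (hk : IsVolterraKernel k)
include hk

lemma intervalIntegrable_comp_sub_mul {g : ℝ → ℝ} (hg : Continuous g) {a b T : ℝ} (ha : a ≤ T)
    (hb : b ≤ T) : IntervalIntegrable (fun s ↦ k (T - s) * g s) volume a b := by
  have hint := ((hk.intervalIntegrable (sub_nonneg.2 ha)).symm.trans
    (hk.intervalIntegrable (sub_nonneg.2 hb))).comp_sub_left T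
  simp only [sub_sub_cancel] at hint
  exact hint.mul_continuousOn hg.continuousOn

lemma integral_comp_sub_mul_mono {f g : ℝ → ℝ} (hf : Continuous f) (hg : Continuous g)
    {a T : ℝ} (haT : a ≤ T) (hfg : ∀ s ∈ Ioo a T, f s ≤ g s) :
    ∫ s in a..T, k (T - s) * f s ≤ ∫ s in a..T, k (T - s) * g s :=
  integral_mono_on_of_le_Ioo haT (hk.intervalIntegrable_comp_sub_mul hf haT le_rfl)
    (hk.intervalIntegrable_comp_sub_mul hg haT le_rfl) fun s hs ↦
      mul_le_mul_of_nonneg_left (hfg s hs) (hk.pos (sub_pos.2 hs.2)).le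

lemma integral_mono {a b : ℝ} (ha : 0 ≤ a) (hab : a ≤ b) :
    ∫ x in (0 : ℝ)..a, k x ≤ ∫ x in (0 : ℝ)..b, k x := by
  refine integral_mono_interval le_rfl ha hab ?_ (hk.intervalIntegrable (ha.trans hab))
  exact (ae_restrict_iff' measurableSet_Ioc).2 (.of_forall fun x hx ↦ (hk.pos hx.1).le)

lemma volterraConv_eq_add {u : ℝ → ℝ} (hu : Continuous u) {a T : ℝ} (ha : 0 ≤ a)
    (haT : a ≤ T) :
    volterraConv k u T = (∫ s in (0 : ℝ)..a, k (T - s) * u s) + ∫ s in a..T, k (T - s) * u s :=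
  (integral_add_adjacent_intervals
    (hk.intervalIntegrable_comp_sub_mul hu (ha.trans haT) haT)
    (hk.intervalIntegrable_comp_sub_mul hu haT le_rfl)).symm

lemma pos_of_forall_pos_of_integral_lt {g q : ℝ → ℝ} (hg : Continuous g) {m T : ℝ} (hm : 0 ≤ m)
    (hmT : m < T) (hqm : 0 ≤ q m) (hpos : ∀ s ∈ Icc 0 m, 0 < g s)
    (hmax : ∀ s ∈ Ioo m T, g s ≤ g m) (hkq : ∀ s ∈ Ioo 0 m, k (T - s) * q m ≤ k (m - s) * q T)
    (hmass : (∫ x in (0 : ℝ)..T - m, k x) * q m < q T) (heqm : g m + volterraConv k g m = q m)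
    (heqT : g T + volterraConv k g T = q T) : 0 < g T := by
  have hpast : q m * ∫ s in (0 : ℝ)..m, k (T - s) * g s ≤ q T * volterraConv k g m := by
    rw [volterraConv, ← intervalIntegral.integral_const_mul, ← intervalIntegral.integral_const_mul]
    refine integral_mono_on_of_le_Ioo hm
      ((hk.intervalIntegrable_comp_sub_mul hg (hm.trans hmT.le) hmT.le).const_mul _)
      ((hk.intervalIntegrable_comp_sub_mul hg hm le_rfl).const_mul _) fun s hs ↦ ?_
    have hgs := hpos s (Ioo_subset_Icc_self hs)
    linear_combination g s * hkq s hs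
  have hrecent : ∫ s in m..T, k (T - s) * g s ≤ (∫ x in (0 : ℝ)..T - m, k x) * g m :=
    (hk.integral_comp_sub_mul_mono hg continuous_const hmT.le hmax).trans_eq
      (integral_comp_sub_mul_const k m T _)
  rw [hk.volterraConv_eq_add hg hm hmT.le] at heqT
  have hgm : 0 < g m := hpos m (right_mem_Icc.2 hm)
  refine pos_of_mul_pos_right (a := q m) ?_ hqm
  calc 0 < (q T - (∫ x in (0 : ℝ)..T - m, k x) * q m) * g m := mul_pos (sub_pos.2 hmass) hgm
    _ ≤ q m * g T := by linear_combination q m * hrecent + hpast + q T * heqm - q m * heqT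

theorem pos_of_add_volterraConv_eq {g q : ℝ → ℝ} (hg : Continuous g)
    (hq : ∀ t, 0 ≤ t → 0 < q t)
    (hkq : ∀ s t t', 0 ≤ s → s < t → t < t' → k (t' - s) * q t ≤ k (t - s) * q t')
    (heq : ∀ t, 0 ≤ t → g t + volterraConv k g t = q t) {t : ℝ} (ht : 0 ≤ t) : 0 < g t := by
  by_contra! hgt
  have hg0 : 0 < g 0 := by simpa [volterraConv, ← heq 0 le_rfl] using hq 0 le_rfl
  obtain ⟨T, hT, hgT, hpos⟩ := exists_first_nonpos hg ht hg0 hgt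
  have hkT2 : 0 < k (T / 2) := hk.pos (half_pos hT)
  obtain ⟨ε, ⟨hε, hεT⟩, hmass⟩ := exists_integral_lt (hk.intervalIntegrable (half_pos hT).le)
    (half_pos hT) (div_pos (hk.pos hT) hkT2)
  obtain ⟨m, ⟨hεm, hmT'⟩, hmax⟩ := isCompact_Icc.exists_isMaxOn
    (nonempty_Icc.2 (sub_le_self T hε.le)) hg.continuousOn
  have hgm : 0 < g m := (hpos (T - ε) ⟨by linarith, by linarith⟩).trans_le
    (hmax (left_mem_Icc.2 (sub_le_self T hε.le)))
  have hmT : m < T := hmT'.lt_of_ne fun h ↦ hgm.not_ge (h ▸ hgT)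
  have hm : 0 < m := by linarith
  refine hgT.not_gt (hk.pos_of_forall_pos_of_integral_lt hg hm.le hmT (hq m hm.le).le
    (fun s hs ↦ hpos s ⟨hs.1, hs.2.trans_lt hmT⟩) (fun s hs ↦ hmax ⟨hεm.trans hs.1.le, hs.2.le⟩)
    (fun s hs ↦ hkq s m T hs.1.le hs.2 hmT) ?_ (heq m hm.le) (heq T hT.le))
  calc (∫ x in (0 : ℝ)..T - m, k x) * q m
      ≤ (∫ x in (0 : ℝ)..ε, k x) * q m := mul_le_mul_of_nonneg_right
        (hk.integral_mono (by linarith) (by linarith)) (hq m hm.le).le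
    _ < k T / k (T / 2) * q m := mul_lt_mul_of_pos_right hmass (hq m hm.le)
    _ ≤ q T := by
      rw [div_mul_eq_mul_div, div_le_iff₀' hkT2]
      calc k T * q m ≤ k m * q T := by simpa using hkq 0 m T le_rfl hm hmT
        _ ≤ k (T / 2) * q T := mul_le_mul_of_nonneg_right
          (hk.antitoneOn (half_pos hT) hm (by linarith)) (hq T hT.le).le

lemma volterraConv_sub {u v : ℝ → ℝ} (hu : Continuous u) (hv : Continuous v) {t : ℝ}
    (ht : 0 ≤ t) :
    volterraConv k (fun s ↦ u s - v s) t = volterraConv k u t - volterraConv k v t := by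
  simp only [volterraConv, mul_sub]
  exact integral_sub (hk.intervalIntegrable_comp_sub_mul hu ht le_rfl)
    (hk.intervalIntegrable_comp_sub_mul hv ht le_rfl)

lemma volterraConv_add_right {u : ℝ → ℝ} (hu : Continuous u) {t δ : ℝ} (ht : 0 ≤ t)
    (hδ : 0 ≤ δ) :
    volterraConv k u (t + δ) = (∫ s in (0 : ℝ)..δ, k (t + δ - s) * u s) +
      volterraConv k (fun s ↦ u (s + δ)) t := by
  rw [hk.volterraConv_eq_add hu hδ (le_add_of_nonneg_left ht), volterraConv]
  have hshift := integral_comp_add_right (a := 0) (b := t) (fun s ↦ k (t + δ - s) * u s) δ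
  simp only [zero_add, add_sub_add_right_eq_sub] at hshift
  rw [hshift]

lemma hasSum_volterraConv {f : ℕ → ℝ → ℝ} {M : ℕ → ℝ} (hf : ∀ n, Continuous (f n)) {t : ℝ}
    (ht : 0 ≤ t) (hM : Summable M) (hfM : ∀ n, ∀ s ∈ Icc 0 t, |f n s| ≤ M n) :
    HasSum (fun n ↦ volterraConv k (f n) t) (volterraConv k (fun s ↦ ∑' n, f n s) t) := by
  refine hasSum_integral_of_dominated_convergence (fun n s ↦ k (t - s) * M n)
    (fun n ↦ ?_) (fun n ↦ ?_) (.of_forall fun s _ ↦ hM.mul_left _) ?_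
    (.of_forall fun s hs ↦ Summable.hasSum ?_ |>.mul_left _)
  · rw [uIoc_of_le ht]
    exact (hk.intervalIntegrable_comp_sub_mul (hf n) ht le_rfl).1.aestronglyMeasurable
  · filter_upwards [compl_mem_ae_iff.2 (measure_singleton t)] with s hst hs
    rw [uIoc_of_le ht] at hs
    rw [norm_mul, Real.norm_of_nonneg (hk.pos (sub_pos.2 (hs.2.lt_of_ne hst))).le]
    exact mul_le_mul_of_nonneg_left (hfM n s (Ioc_subset_Icc_self hs))
      (hk.pos (sub_pos.2 (hs.2.lt_of_ne hst))).le
  · simp only [tsum_mul_left]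
    exact hk.intervalIntegrable_comp_sub_mul continuous_const ht le_rfl
  · rw [uIoc_of_le ht] at hs
    exact hM.of_norm_bounded fun n ↦ hfM n s (Ioc_subset_Icc_self hs)

end IsVolterraKernel

lemma add_le_add_of_convexOn {f : ℝ → ℝ} {S : Set ℝ} (hf : ConvexOn ℝ S f) {a b h : ℝ}
    (ha : a ∈ S) (hbh : b + h ∈ S) (hab : a ≤ b) (hh : 0 ≤ h) :
    f (a + h) + f b ≤ f a + f (b + h) := by
  rcases (add_nonneg (sub_nonneg.2 hab) hh).eq_or_lt with h0 | hpos
  · obtain rfl : a = b := by linarith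
    obtain rfl : h = 0 := by linarith
    simp
  set θ := h / (b - a + h)
  have hθ0 : 0 ≤ θ := div_nonneg hh hpos.le
  have hθ1 : 0 ≤ 1 - θ := sub_nonneg.2 ((div_le_one hpos).2 (by linarith))
  have hθ : θ * (b - a + h) = h := div_mul_cancel₀ h hpos.ne'
  have hleft : (1 - θ) * a + θ * (b + h) = a + h := by linear_combination hθ
  have hright : θ * a + (1 - θ) * (b + h) = b := by linear_combination -hθ
  have h1 := hf.2 ha hbh hθ1 hθ0 (by ring)
  have h2 := hf.2 ha hbh hθ0 hθ1 (by ring)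
  simp only [smul_eq_mul, hleft, hright] at h1 h2
  linarith

lemma IsVolterraKernel.mul_le_mul_of_convexOn_log {k : ℝ → ℝ} (hk : IsVolterraKernel k)
    (hlog : ConvexOn ℝ (Ioi 0) fun t ↦ Real.log (k t)) {a b h : ℝ} (ha : 0 < a) (hab : a ≤ b)
    (hh : 0 ≤ h) : k (a + h) * k b ≤ k a * k (b + h) := by
  have hb := ha.trans_le hab
  have hka := hk.pos ha
  have hkb := hk.pos hb
  have hkah := hk.pos (add_pos_of_pos_of_nonneg ha hh)
  have hkbh := hk.pos (add_pos_of_pos_of_nonneg hb hh)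
  rw [← Real.log_le_log_iff (mul_pos hkah hkb) (mul_pos hka hkbh),
    Real.log_mul hkah.ne' hkb.ne', Real.log_mul hka.ne' hkbh.ne']
  exact add_le_add_of_convexOn hlog ha (add_pos_of_pos_of_nonneg hb hh) hab hh

namespace IsVolterraResolvent

variable {k u : ℝ → ℝ} (hu : IsVolterraResolvent k u) (hk : IsVolterraKernel k)
include hu hk

lemma pos {t : ℝ} (ht : 0 ≤ t) : 0 < u t :=
  hk.pos_of_add_volterraConv_eq (q := fun _ ↦ 1) hu.continuous (fun _ _ ↦ one_pos)
    (fun s t t' _ hst htt' ↦ by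
      simpa using hk.antitoneOn (sub_pos.2 hst) (sub_pos.2 (hst.trans htt')) (by gcongr))
    hu.add_volterraConv ht

lemma sub_shift_add_volterraConv {t δ : ℝ} (ht : 0 ≤ t) (hδ : 0 ≤ δ) :
    u t - u (t + δ) + volterraConv k (fun s ↦ u s - u (s + δ)) t =
      ∫ s in (0 : ℝ)..δ, k (t + δ - s) * u s := by
  have hcont := hu.continuous
  rw [hk.volterraConv_sub hcont (by fun_prop) ht]
  have heq := hu.add_volterraConv (add_nonneg ht hδ)
  rw [hk.volterraConv_add_right hcont ht hδ] at heq
  linear_combination hu.add_volterraConv ht - heq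

theorem strictAntiOn (hlog : ConvexOn ℝ (Ioi 0) fun t ↦ Real.log (k t)) :
    StrictAntiOn u (Ici 0) := by
  intro t ht t' _ htt'
  obtain ⟨δ, hδ, rfl⟩ : ∃ δ > 0, t' = t + δ := ⟨t' - t, sub_pos.2 htt', by ring⟩
  have hcont := hu.continuous
  have hint : ∀ t, 0 ≤ t → IntervalIntegrable (fun s ↦ k (t + δ - s) * u s) volume 0 δ :=
    fun t ht ↦ hk.intervalIntegrable_comp_sub_mul hcont (by linarith) (by linarith)
  refine sub_pos.1 (hk.pos_of_add_volterraConv_eq (g := fun s ↦ u s - u (s + δ))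
    (q := fun t ↦ ∫ s in (0 : ℝ)..δ, k (t + δ - s) * u s) (by fun_prop) (fun t ht ↦ ?_)
    (fun s t t' hs hst htt' ↦ ?_) (fun t ht ↦ hu.sub_shift_add_volterraConv hk ht hδ.le) ht)
  · exact intervalIntegral_pos_of_pos_on (hint t ht)
      (fun s hs ↦ mul_pos (hk.pos (by linarith [hs.2])) (hu.pos hk hs.1.le)) hδ
  · have ht : 0 ≤ t := hs.trans hst.le
    simp only [← intervalIntegral.integral_const_mul]
    refine integral_mono_on_of_le_Ioo hδ.le ((hint t ht).const_mul _)
      ((hint t' (ht.trans htt'.le)).const_mul _) fun r hr ↦ ?_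
    have hfour := hk.mul_le_mul_of_convexOn_log hlog (a := t - s) (b := t + δ - r) (h := t' - t)
      (sub_pos.2 hst) (by linarith [hr.2]) (sub_nonneg.2 htt'.le)
    rw [show t - s + (t' - t) = t' - s by ring,
      show t + δ - r + (t' - t) = t' + δ - r by ring] at hfour
    have hur := hu.pos hk hr.1.le
    linear_combination u r * hfour

theorem mul_one_add_integral_le_one (hlog : ConvexOn ℝ (Ioi 0) fun t ↦ Real.log (k t)) {t : ℝ}
    (ht : 0 ≤ t) : u t * (1 + ∫ x in (0 : ℝ)..t, k x) ≤ 1 := by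
  have hconv : (∫ x in (0 : ℝ)..t, k x) * u t ≤ volterraConv k u t := by
    have hconst := integral_comp_sub_mul_const k 0 t (u t)
    rw [sub_zero] at hconst
    rw [← hconst]
    exact hk.integral_comp_sub_mul_mono continuous_const hu.continuous ht fun s hs ↦
      (hu.strictAntiOn hk hlog hs.1.le ht hs.2).le
  linarith [hu.add_volterraConv ht]

end IsVolterraResolvent

/-- The Abel kernel `t ^ (α - 1) / Γ(α)`, normalised so that convolution with it is the
Riemann–Liouville fractional integral of order `α`. -/
noncomputable def abelKernel (α t : ℝ) : ℝ :=
  t ^ (α - 1) / Real.Gamma α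

lemma isVolterraKernel_abelKernel {α : ℝ} (h0 : 0 < α) (h1 : α ≤ 1) :
    IsVolterraKernel (abelKernel α) where
  pos _ ht := div_pos (Real.rpow_pos_of_pos ht _) (Real.Gamma_pos_of_pos h0)
  antitoneOn _ hs _ _ hst := div_le_div_of_nonneg_right
    (Real.rpow_le_rpow_of_nonpos hs hst (sub_nonpos.2 h1)) (Real.Gamma_pos_of_pos h0).le
  intervalIntegrable _ _ := (intervalIntegrable_rpow' (by linarith)).div_const _

lemma convexOn_log_abelKernel {α : ℝ} (h0 : 0 < α) (h1 : α ≤ 1) :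
    ConvexOn ℝ (Ioi 0) fun t ↦ Real.log (abelKernel α t) := by
  have hlog : ConvexOn ℝ (Ioi 0) fun t ↦ (1 - α) * -Real.log t + -Real.log (Real.Gamma α) :=
    (strictConcaveOn_log_Ioi.concaveOn.neg.smul (sub_nonneg.2 h1)).add_const
      (-Real.log (Real.Gamma α))
  refine hlog.congr fun t ht ↦ ?_
  rw [abelKernel, Real.log_div (Real.rpow_pos_of_pos ht _).ne' (Real.Gamma_pos_of_pos h0).ne',
    Real.log_rpow ht]
  ring

lemma integral_abelKernel {α : ℝ} (h0 : 0 < α) (t : ℝ) :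
    ∫ s in (0 : ℝ)..t, abelKernel α s = t ^ α / Real.Gamma (α + 1) := by
  simp only [abelKernel, intervalIntegral.integral_div]
  rw [integral_rpow (.inl (by linarith)), Real.Gamma_add_one h0.ne']
  simp [Real.zero_rpow h0.ne', div_div]

lemma integral_sub_rpow_mul_rpow {a b t : ℝ} (ha : 0 < a) (hb : 0 < b) (ht : 0 < t) :
    ∫ s in (0 : ℝ)..t, (t - s) ^ (a - 1) * s ^ (b - 1) =
      t ^ (a + b - 1) * ProbabilityTheory.beta a b := by
  apply Complex.ofReal_injective
  have hcast : ∫ s in (0 : ℝ)..t, (((t - s) ^ (a - 1) * s ^ (b - 1) : ℝ) : ℂ) =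
      ∫ s in (0 : ℝ)..t, (s : ℂ) ^ ((b : ℂ) - 1) * ((t : ℂ) - s) ^ ((a : ℂ) - 1) := by
    refine integral_congr fun s hs ↦ ?_
    rw [uIcc_of_le ht.le] at hs
    rw [Complex.ofReal_mul, Complex.ofReal_cpow (sub_nonneg.2 hs.2), Complex.ofReal_cpow hs.1]
    push_cast
    ring
  rw [← intervalIntegral.integral_ofReal, hcast, Complex.betaIntegral_scaled _ _ ht,
    Complex.betaIntegral_eq_Gamma_mul_div _ _ (by simpa) (by simpa), ProbabilityTheory.beta]
  push_cast [Complex.ofReal_cpow ht.le, ← Complex.Gamma_ofReal]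
  rw [add_comm (b : ℂ), mul_comm (Complex.Gamma b)]

lemma volterraConv_abelKernel_rpow {α b t : ℝ} (h0 : 0 < α) (hb : -1 < b) (ht : 0 < t) :
    volterraConv (abelKernel α) (fun s ↦ s ^ b / Real.Gamma (b + 1)) t =
      t ^ (α + b) / Real.Gamma (α + b + 1) := by
  have hb1 : 0 < b + 1 := by linarith
  have hbeta := integral_sub_rpow_mul_rpow h0 hb1 ht
  rw [add_sub_cancel_right, ← add_assoc, add_sub_cancel_right, ProbabilityTheory.beta] at hbeta
  have hα := (Real.Gamma_pos_of_pos h0).ne'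
  have hb' := (Real.Gamma_pos_of_pos hb1).ne'
  calc volterraConv (abelKernel α) (fun s ↦ s ^ b / Real.Gamma (b + 1)) t
      = (∫ s in (0 : ℝ)..t, (t - s) ^ (α - 1) * s ^ b) / (Real.Gamma α * Real.Gamma (b + 1)) := by
        simp only [volterraConv, abelKernel, div_mul_div_comm, intervalIntegral.integral_div]
    _ = t ^ (α + b) / Real.Gamma (α + b + 1) := by
        rw [hbeta, ← add_assoc]
        field_simp

lemma rpow_mul_exp_neg_le_Gamma {r s : ℝ} (hr : 0 ≤ r) (hs : 1 ≤ s) :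
    r ^ (s - 1) * Real.exp (-r) ≤ Real.Gamma s := by
  have hint := Real.GammaIntegral_convergent (zero_lt_one.trans_le hs)
  have hsub : Ioi r ⊆ Ioi 0 := Ioi_subset_Ioi hr
  rw [Real.Gamma_eq_integral (zero_lt_one.trans_le hs)]
  calc r ^ (s - 1) * Real.exp (-r)
      = ∫ x in Ioi r, Real.exp (-x) * r ^ (s - 1) := by
        rw [MeasureTheory.integral_mul_const, integral_exp_neg_Ioi, mul_comm]
    _ ≤ ∫ x in Ioi r, Real.exp (-x) * x ^ (s - 1) :=
        setIntegral_mono_on ((integrableOn_exp_neg_Ioi r).mul_const _) (hint.mono_set hsub)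
          measurableSet_Ioi fun x hx ↦ mul_le_mul_of_nonneg_left
            (Real.rpow_le_rpow hr (le_of_lt hx) (sub_nonneg.2 hs)) (Real.exp_pos _).le
    _ ≤ ∫ x in Ioi 0, Real.exp (-x) * x ^ (s - 1) :=
        setIntegral_mono_set hint ((ae_restrict_iff' measurableSet_Ioi).2 (.of_forall fun x hx ↦
          mul_nonneg (Real.exp_pos _).le (Real.rpow_nonneg (le_of_lt hx) _))) hsub.eventuallyLE

lemma summable_mittagLeffler {α : ℝ} (h0 : 0 < α) (x : ℝ) :
    Summable fun n : ℕ ↦ x ^ n / Real.Gamma (α * n + 1) := by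
  obtain ⟨r, hxr, hr⟩ : ∃ r : ℝ, |x| < r ^ α ∧ 0 < r :=
    (((tendsto_rpow_atTop h0).eventually_gt_atTop |x|).and (eventually_gt_atTop 0)).exists
  have hrα : 0 < r ^ α := Real.rpow_pos_of_pos hr α
  have hgeom : Summable fun n : ℕ ↦ (|x| / r ^ α) ^ n * Real.exp r :=
    (summable_geometric_of_lt_one (by positivity) ((div_lt_one hrα).2 hxr)).mul_right _
  refine hgeom.of_norm_bounded fun n ↦ ?_
  have hΓ : (r ^ α) ^ n * Real.exp (-r) ≤ Real.Gamma (α * n + 1) := by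
    have hbound := rpow_mul_exp_neg_le_Gamma hr.le (s := α * n + 1)
      (le_add_of_nonneg_left (by positivity))
    rwa [add_sub_cancel_right, Real.rpow_mul_natCast hr.le] at hbound
  calc ‖x ^ n / Real.Gamma (α * n + 1)‖
      = |x| ^ n / Real.Gamma (α * n + 1) := by
        rw [norm_div, norm_pow, Real.norm_eq_abs, Real.norm_of_nonneg (by positivity)]
    _ ≤ |x| ^ n / ((r ^ α) ^ n * Real.exp (-r)) := by gcongr
    _ = (|x| / r ^ α) ^ n * Real.exp r := by
        rw [Real.exp_neg, div_pow]
        field_simp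

lemma abs_mittagLeffler_term_le {α x y : ℝ} (h0 : 0 < α) (hxy : |x| ≤ y) (n : ℕ) :
    |x ^ n / Real.Gamma (α * n + 1)| ≤ y ^ n / Real.Gamma (α * n + 1) := by
  rw [abs_div, abs_pow, abs_of_pos (a := Real.Gamma (α * n + 1)) (by positivity)]
  gcongr

lemma continuous_mittagLeffler {α : ℝ} (h0 : 0 < α) : Continuous (mittagLeffler α) := by
  refine continuous_iff_continuousAt.2 fun x ↦ ?_
  have hball : ContinuousOn (mittagLeffler α) (Metric.ball 0 (|x| + 1)) :=
    continuousOn_tsum (fun n ↦ by fun_prop) (summable_mittagLeffler h0 (|x| + 1)) fun n y hy ↦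
      abs_mittagLeffler_term_le h0 (mem_ball_zero_iff.1 hy).le n
  exact hball.continuousAt (Metric.isOpen_ball.mem_nhds (by simp))

lemma mittagLeffler_zero_right (α : ℝ) : mittagLeffler α 0 = 1 := by
  rw [mittagLeffler, tsum_eq_single 0 fun n hn ↦ by simp [hn]]
  simp

lemma mittagLeffler_eq_one_add_tsum {α : ℝ} (h0 : 0 < α) (x : ℝ) :
    mittagLeffler α x = 1 + ∑' n : ℕ, x ^ (n + 1) / Real.Gamma (α * (n + 1 : ℕ) + 1) := by
  rw [mittagLeffler, (summable_mittagLeffler h0 x).tsum_eq_zero_add]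
  simp

lemma volterraConv_abelKernel_mittagLeffler_term {α t : ℝ} (h0 : 0 < α) (ht : 0 < t) (n : ℕ) :
    volterraConv (abelKernel α) (fun s ↦ (-s ^ α) ^ n / Real.Gamma (α * n + 1)) t =
      -((-t ^ α) ^ (n + 1) / Real.Gamma (α * (n + 1 : ℕ) + 1)) := by
  have hn : (-1 : ℝ) < α * n := by linarith [mul_nonneg h0.le n.cast_nonneg]
  have hpow : ∀ s : ℝ, 0 ≤ s → ∀ m : ℕ, (-s ^ α) ^ m = (-1) ^ m * s ^ (α * m) := fun s hs m ↦ by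
    rw [neg_pow, Real.rpow_mul_natCast hs]
  calc volterraConv (abelKernel α) (fun s ↦ (-s ^ α) ^ n / Real.Gamma (α * n + 1)) t
      = (-1) ^ n *
          volterraConv (abelKernel α) (fun s ↦ s ^ (α * n) / Real.Gamma (α * n + 1)) t := by
        rw [volterraConv, volterraConv, ← intervalIntegral.integral_const_mul]
        refine integral_congr fun s hs ↦ ?_
        rw [uIcc_of_le ht.le] at hs
        simp only [hpow s hs.1]
        ring
    _ = -((-t ^ α) ^ (n + 1) / Real.Gamma (α * (n + 1 : ℕ) + 1)) := by
        rw [volterraConv_abelKernel_rpow h0 hn ht, hpow t ht.le,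
          show α * (n + 1 : ℕ) = α + α * n by push_cast; ring]
        ring

theorem isVolterraResolvent_mittagLeffler {α : ℝ} (h0 : 0 < α) (h1 : α ≤ 1) :
    IsVolterraResolvent (abelKernel α) fun t ↦ mittagLeffler α (-t ^ α) where
  continuous := (continuous_mittagLeffler h0).comp (Real.continuous_rpow_const h0.le).neg
  add_volterraConv t ht := by
    rcases ht.eq_or_lt with rfl | hpos
    · simp [volterraConv, Real.zero_rpow h0.ne', mittagLeffler_zero_right]
    have hcont : ∀ n : ℕ, Continuous fun s : ℝ ↦ (-s ^ α) ^ n / Real.Gamma (α * n + 1) :=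
      fun n ↦ ((Real.continuous_rpow_const h0.le).neg.pow n).div_const _
    have hsum := (isVolterraKernel_abelKernel h0 h1).hasSum_volterraConv hcont ht
      (summable_mittagLeffler h0 (t ^ α)) fun n s hs ↦ abs_mittagLeffler_term_le h0
        (by rw [abs_neg, abs_of_nonneg (Real.rpow_nonneg hs.1 α)]
            exact Real.rpow_le_rpow hs.1 hs.2 h0.le) n
    simp only [volterraConv_abelKernel_mittagLeffler_term h0 hpos] at hsum
    have hconv : volterraConv (abelKernel α) (fun s ↦ mittagLeffler α (-s ^ α)) t =
        -∑' n : ℕ, (-t ^ α) ^ (n + 1) / Real.Gamma (α * (n + 1 : ℕ) + 1) := by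
      rw [← tsum_neg]
      exact hsum.tsum_eq.symm
    rw [hconv, mittagLeffler_eq_one_add_tsum h0]
    ring

theorem mittagLeffler_neg_le {α x : ℝ} (h0 : 0 < α) (h1 : α ≤ 1) (hx : 0 ≤ x) :
    mittagLeffler α (-x) ≤ 1 / (1 + x / Real.Gamma (α + 1)) := by
  have hbound := (isVolterraResolvent_mittagLeffler h0 h1).mul_one_add_integral_le_one
    (isVolterraKernel_abelKernel h0 h1) (convexOn_log_abelKernel h0 h1) (Real.rpow_nonneg hx α⁻¹)
  rw [integral_abelKernel h0, Real.rpow_inv_rpow hx h0.ne'] at hbound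
  exact (le_div_iff₀ (by positivity)).2 hbound

lemma Gamma_le_one {s : ℝ} (hs : s ∈ Icc 1 2) : Real.Gamma s ≤ 1 := by
  simpa using Real.convexOn_Gamma.le_max_of_mem_Icc (mem_Ioi.2 one_pos) (mem_Ioi.2 two_pos) hs

theorem mittagLeffler_decay_bound_general (α : ℝ) (hα : α ∈ Ioc 0 1) (lam : ℝ) (hlam : 0 ≤ lam)
    (t : ℝ) (ht : 0 ≤ t) : mittagLeffler α (-lam * t ^ α) ≤ 1 / (1 + lam * t ^ α) := by
  have hx : 0 ≤ lam * t ^ α := mul_nonneg hlam (Real.rpow_nonneg ht α)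
  have hΓ : 0 < Real.Gamma (α + 1) := Real.Gamma_pos_of_pos (by linarith [hα.1])
  have hΓ_le : Real.Gamma (α + 1) ≤ 1 := Gamma_le_one ⟨by linarith [hα.1], by linarith [hα.2]⟩
  calc mittagLeffler α (-lam * t ^ α)
      ≤ 1 / (1 + lam * t ^ α / Real.Gamma (α + 1)) := by
        simpa only [neg_mul] using mittagLeffler_neg_le hα.1 hα.2 hx
    _ ≤ 1 / (1 + lam * t ^ α) := by
        gcongr
        exact le_div_self hx hΓ hΓ_le

theorem mittagLeffler_decay_bound (α : ℝ) (hα : α ∈ Set.Ioo (0:ℝ) 1) :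
    ∃ C : ℝ, 0 < C ∧ ∀ lam : ℝ, 0 < lam → ∀ t : ℝ, 0 ≤ t →
      mittagLeffler α (-lam * t ^ α) ≤ C / (1 + lam * t ^ α) :=
  ⟨1, one_pos, fun lam hlam ↦
    mittagLeffler_decay_bound_general α (Ioo_subset_Ioc_self hα) lam hlam.le⟩
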